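/- In Sym, for every composition I: S^I = Σ_{J ⪰ I} (1/π_u(J,I)) Ψ^J and Ψ^I = Σ_{J ⪰ I} (−1)^{ℓ(J)−ℓ(I)} lp(J,I) · S^J. Here, for J ⪰ I with canonical decomposition J = J₁·J₂⋯J_m into consecutive blocks with |J_p| = i_p: π_u(K) := k₁(k₁+k₂)⋯(k₁+⋯+k_s) denotes the product of all partial sums of a composition K = (k₁,…,k_s) and π_u(J,I) := Π_p π_u(J_p); lp(K) := k_s denotes the last part of K and lp(J,I) := Π_p lp(J_p). -/

import Mathlib

open Finset

namespace NCSF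

noncomputable section

/-- `Sym = ℚ⟨S₁,S₂,S₃,…⟩`, the free associative algebra over `ℚ` on countably many
noncommuting generators, the generator of index `n : ℕ` representing `S (n+1)`. -/
abbrev Sym : Type := FreeAlgebra ℚ ℕ

/-- The complete homogeneous noncommutative symmetric functions: `S 0 = 1` and
`S (n+1)` is the `n`-th generator of the free algebra. -/
def S : ℕ → Sym
  | 0 => 1
  | n + 1 => FreeAlgebra.ι ℚ n

/-- `S^I = S_{i₁} ⋯ S_{i_r}` for a list `I = [i₁, …, i_r]`. -/
def SProd (L : List ℕ) : Sym := (L.map S).prod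

/-- The set of partial sums `i₁ + ⋯ + i_k` (`1 ≤ k ≤ length`) of a list. -/
def psums (L : List ℕ) : Finset ℕ :=
  (Finset.range L.length).image fun k => (L.take (k + 1)).sum

/-- The noncommutative ribbon Schur function
`R_I = ∑_{J ⪯ I} (−1)^{ℓ(I)−ℓ(J)} S^J`, the sum being over the compositions `J`
of `|I|` that are coarser than `I` (every partial sum of `J` is a partial sum of `I`). -/
def Ribbon (L : List ℕ) : Sym :=
  ∑ J : Composition L.sum,
    if psums J.blocks ⊆ psums L then ((-1 : ℚ) ^ (L.length - J.length)) • SProd J.blocks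
    else 0


/-- The largest boundary of the coarse composition `I` (including `0`) lying strictly
below `s`.  For `J ⪰ I`, the partial sum of `J` within its block of the canonical
decomposition, at total size `s`, is `s - lastBdry I s`. -/
def lastBdry (I : List ℕ) (s : ℕ) : ℕ :=
  ((insert 0 (psums I)).filter fun x => x < s).max.unbotD 0

/-- `π_u(J,I) = ∏_p π_u(J_p)`: the product, over all positions `k` of `J`, of the
partial sum of `J` within its block of the canonical decomposition of `J ⪰ I`;
for each block `J_p = (k₁,…,k_s)` this contributes `π_u(J_p) = k₁(k₁+k₂)⋯(k₁+⋯+k_s)`. -/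
def piu (J I : List ℕ) : ℕ :=
  ∏ k ∈ Finset.range J.length,
    ((J.take (k + 1)).sum - lastBdry I ((J.take (k + 1)).sum))

/-- `lp(J,I) = ∏_p lp(J_p)`: the product of the last parts of the blocks of the
canonical decomposition of `J ⪰ I`, i.e. of the parts of `J` whose cumulative sum is a
partial sum of `I`. -/
def lpP (J I : List ℕ) : ℕ :=
  ∏ k ∈ (Finset.range J.length).filter (fun k => (J.take (k + 1)).sum ∈ psums I),
    J.getD k 0

/-- Lists of positive integers with sum `n`. -/
def C (n : ℕ) : Finset (List ℕ) := (Finset.univ : Finset (Composition n)).image Composition.blocks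

theorem mem_C {n : ℕ} {L : List ℕ} : L ∈ C n ↔ (∀ x ∈ L, 0 < x) ∧ L.sum = n := by
  unfold C
  simp only [Finset.mem_image, Finset.mem_univ, true_and]
  constructor
  · rintro ⟨c, rfl⟩
    exact ⟨fun x hx => c.blocks_pos hx, c.blocks_sum⟩
  · rintro ⟨h1, h2⟩
    exact ⟨⟨L, fun {i} hi => h1 i hi, h2⟩, rfl⟩

theorem sum_C {n : ℕ} (F : List ℕ → Sym) :
    ∑ J : Composition n, F J.blocks = ∑ J ∈ C n, F J := by
  unfold C
  rw [Finset.sum_image]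
  intro a _ b _ h
  exact Composition.ext h

theorem C_zero : C 0 = {[]} := by
  ext L
  rw [mem_C, Finset.mem_singleton]
  constructor
  · rintro ⟨h1, h2⟩
    cases L with
    | nil => rfl
    | cons a L =>
      have := h1 a (by simp)
      simp at h2
      omega
  · rintro rfl
    simp

theorem sum_C_cons (n : ℕ) (hn : 0 < n) (F : List ℕ → Sym) :
    ∑ J ∈ C n, F J = ∑ j ∈ Finset.range n, ∑ J ∈ C (n - (j + 1)), F ((j + 1) :: J) := by
  rw [Finset.sum_sigma']
  symm
  refine Finset.sum_bij (fun p _ => (p.1 + 1) :: p.2) ?_ ?_ ?_ ?_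
  · rintro ⟨j, J⟩ h
    simp only [Finset.mem_sigma, Finset.mem_range, mem_C] at h
    rw [mem_C]
    refine ⟨?_, ?_⟩
    · intro x hx
      rcases List.mem_cons.1 hx with rfl | hx
      · simp
      · exact h.2.1 x hx
    · simp [h.2.2]; omega
  · rintro ⟨j, J⟩ h ⟨j', J'⟩ h' e
    simp at e
    obtain ⟨rfl, rfl⟩ := e
    rfl
  · intro L hL
    rw [mem_C] at hL
    cases L with
    | nil => simp at hL; omega
    | cons a L =>
      have ha := hL.1 a (by simp)
      have hs := hL.2
      simp at hs
      refine ⟨⟨a - 1, L⟩, ?_, ?_⟩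
      · simp only [Finset.mem_sigma, Finset.mem_range, mem_C]
        refine ⟨by omega, fun x hx => hL.1 x (by simp [hx]), by omega⟩
      · simp; omega
  · intros; rfl

theorem sum_C_snoc (n : ℕ) (hn : 0 < n) (F : List ℕ → Sym) :
    ∑ J ∈ C n, F J = ∑ m ∈ Finset.range n, ∑ J ∈ C m, F (J ++ [n - m]) := by
  have rev : ∀ (m : ℕ) (G : List ℕ → Sym), ∑ J ∈ C m, G J = ∑ J ∈ C m, G J.reverse := by
    intro m G
    refine Finset.sum_bij' (fun J _ => J.reverse) (fun J _ => J.reverse) ?_ ?_ ?_ ?_ ?_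
    · intro J hJ; simpa [mem_C] using hJ
    · intro J hJ; simpa [mem_C] using hJ
    · simp
    · simp
    · simp
  rw [rev, sum_C_cons n hn, ← Finset.sum_range_reflect]
  refine Finset.sum_congr rfl fun m hm => ?_
  have hm := Finset.mem_range.1 hm
  have e1 : n - (n - 1 - m + 1) = m := by omega
  have e2 : n - 1 - m + 1 = n - m := by omega
  rw [e1, e2, rev m]
  simp

theorem mem_psums {L : List ℕ} {x : ℕ} :
    x ∈ psums L ↔ ∃ k < L.length, (L.take (k + 1)).sum = x := by
  simp [psums]

theorem psums_nil : psums [] = ∅ := by simp [psums]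

theorem mem_psums_cons {a : ℕ} {L : List ℕ} {x : ℕ} :
    x ∈ psums (a :: L) ↔ x = a ∨ ∃ y ∈ psums L, x = a + y := by
  simp only [mem_psums]
  constructor
  · rintro ⟨k, hk, rfl⟩
    cases k with
    | zero => left; simp
    | succ k =>
      right
      exact ⟨_, ⟨k, by simpa using hk, rfl⟩, by simp⟩
  · rintro (rfl | ⟨y, ⟨k, hk, rfl⟩, rfl⟩)
    · exact ⟨0, by simp, by simp⟩
    · exact ⟨k + 1, by simpa using hk, by simp⟩

theorem mem_psums_snoc {a : ℕ} {L : List ℕ} {x : ℕ} :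
    x ∈ psums (L ++ [a]) ↔ x = L.sum + a ∨ x ∈ psums L := by
  simp only [mem_psums]
  constructor
  · rintro ⟨k, hk, rfl⟩
    simp at hk
    rcases Nat.lt_or_ge k L.length with h | h
    · right
      exact ⟨k, h, by rw [List.take_append_of_le_length (by omega)]⟩
    · left
      rw [List.take_of_length_le (by simp; omega)]
      simp
  · rintro (rfl | ⟨k, hk, rfl⟩)
    · exact ⟨L.length, by simp, by rw [List.take_of_length_le (by simp)]; simp⟩
    · exact ⟨k, by simp; omega, by rw [List.take_append_of_le_length (by omega)]⟩

theorem psums_le {L : List ℕ} {x : ℕ} (h : x ∈ psums L) : x ≤ L.sum := by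
  obtain ⟨k, _, rfl⟩ := mem_psums.1 h
  exact (List.take_sublist _ _).sum_le_sum (by simp)

theorem psums_pos {L : List ℕ} (hL : ∀ x ∈ L, 0 < x) {x : ℕ} (h : x ∈ psums L) : 0 < x := by
  cases L with
  | nil => simp [psums_nil] at h
  | cons a L =>
    have := hL a (by simp)
    rcases mem_psums_cons.1 h with rfl | ⟨y, _, rfl⟩ <;> omega

theorem sum_mem_psums {L : List ℕ} (h : L ≠ []) : L.sum ∈ psums L := by
  refine mem_psums.2 ⟨L.length - 1, ?_, ?_⟩
  · have := List.length_pos_iff.2 h; omega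
  · rw [List.take_of_length_le (by omega)]

theorem card_psums {L : List ℕ} (hL : ∀ x ∈ L, 0 < x) : (psums L).card = L.length := by
  induction L with
  | nil => simp [psums_nil]
  | cons a L ih =>
    have hL' : ∀ x ∈ L, 0 < x := fun x hx => hL x (by simp [hx])
    have e : psums (a :: L) = insert a ((psums L).image (a + ·)) := by
      ext x
      rw [mem_psums_cons]
      simp [eq_comm]
    rw [e, Finset.card_insert_of_notMem, Finset.card_image_of_injective, ih hL']
    · simp
    · exact add_right_injective a
    · intro h
      obtain ⟨y, hy, hy'⟩ := Finset.mem_image.1 h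
      have := psums_pos hL' hy
      omega

theorem lastBdry_snoc (I : List ℕ) (a s : ℕ) (h : s ≤ I.sum + a) :
    lastBdry (I ++ [a]) s = lastBdry I s := by
  unfold lastBdry
  congr 2
  ext x
  simp only [Finset.mem_filter, Finset.mem_insert, mem_psums_snoc]
  constructor
  · rintro ⟨h1 | h1 | h1, h2⟩
    · exact ⟨Or.inl h1, h2⟩
    · omega
    · exact ⟨Or.inr h1, h2⟩
  · rintro ⟨h1 | h1, h2⟩
    · exact ⟨Or.inl h1, h2⟩
    · exact ⟨Or.inr (Or.inr h1), h2⟩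

theorem lastBdry_top (I : List ℕ) (s : ℕ) (h : I.sum < s) : lastBdry I s = I.sum := by
  unfold lastBdry
  have : ((insert 0 (psums I)).filter fun x => x < s).max = (I.sum : WithBot ℕ) := by
    apply le_antisymm
    · apply Finset.max_le
      intro x hx
      simp only [Finset.mem_filter, Finset.mem_insert] at hx
      rcases hx.1 with rfl | h1
      · exact WithBot.coe_le_coe.2 (Nat.zero_le _)
      · exact WithBot.coe_le_coe.2 (psums_le h1)
    · apply Finset.le_max
      simp only [Finset.mem_filter, Finset.mem_insert]
      refine ⟨?_, h⟩
      by_cases hI : I = []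
      · left; simp [hI]
      · right; exact sum_mem_psums hI
  rw [this]
  rfl

theorem take_sum_le (L : List ℕ) (k : ℕ) : (L.take k).sum ≤ L.sum :=
  (List.take_sublist _ _).sum_le_sum (by simp)

theorem piu_snoc_right (J I : List ℕ) (a : ℕ) (h : J.sum ≤ I.sum + a) :
    piu J (I ++ [a]) = piu J I := by
  unfold piu
  refine Finset.prod_congr rfl fun k _ => ?_
  rw [lastBdry_snoc]
  exact (take_sum_le J _).trans h

theorem piu_snoc_left (J I : List ℕ) (j : ℕ) (h : I.sum < J.sum + j) :
    piu (J ++ [j]) I = piu J I * (J.sum + j - I.sum) := by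
  unfold piu
  rw [List.length_append, List.length_singleton, Finset.prod_range_succ]
  congr 1
  · refine Finset.prod_congr rfl fun k hk => ?_
    have := Finset.mem_range.1 hk
    rw [List.take_append_of_le_length (by omega)]
  · rw [List.take_of_length_le (by simp)]
    simp only [List.sum_append, List.sum_singleton]
    rw [lastBdry_top _ _ h]

/-- Summand in the expansion of `S^I`. -/
def H (Ψ : ℕ → Sym) (J I : List ℕ) : Sym :=
  if psums I ⊆ psums J then ((piu J I : ℚ))⁻¹ • (J.map Ψ).prod else 0

theorem H_snoc_right (Ψ : ℕ → Sym) (J I : List ℕ) (a : ℕ) (ha : 0 < a) (h : J.sum = I.sum + a) :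
    H Ψ J (I ++ [a]) = H Ψ J I := by
  unfold H
  rw [piu_snoc_right _ _ _ h.le]
  congr 1
  apply propext
  constructor
  · intro hs x hx
    exact hs (mem_psums_snoc.2 (Or.inr hx))
  · intro hs x hx
    rcases mem_psums_snoc.1 hx with rfl | hx
    · rw [← h]
      apply sum_mem_psums
      rintro rfl
      simp at h
      omega
    · exact hs hx

theorem H_snoc_left (Ψ : ℕ → Sym) (J I : List ℕ) (j : ℕ) (h : I.sum < J.sum + j) :
    H Ψ (J ++ [j]) I = ((J.sum + j - I.sum : ℕ) : ℚ)⁻¹ • (H Ψ J I * Ψ j) := by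
  unfold H
  rw [piu_snoc_left _ _ _ h]
  have : psums I ⊆ psums (J ++ [j]) ↔ psums I ⊆ psums J := by
    constructor
    · intro hs x hx
      rcases mem_psums_snoc.1 (hs hx) with rfl | hx'
      · have := psums_le hx; omega
      · exact hx'
    · intro hs x hx
      exact mem_psums_snoc.2 (Or.inr (hs hx))
  simp only [this]
  split_ifs
  · rw [List.map_append, List.prod_append, smul_mul_assoc, smul_smul]
    congr 1
    · push_cast
      rw [mul_inv, mul_comm]
    · simp
  · simp

theorem H_eq_zero (Ψ : ℕ → Sym) (J I : List ℕ) (h : J.sum < I.sum) : H Ψ J I = 0 := by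
  unfold H
  rw [if_neg]
  intro hs
  have h1 : I ≠ [] := by rintro rfl; simp at h
  have := psums_le (hs (sum_mem_psums h1))
  omega

theorem main1_step (Ψ : ℕ → Sym)
    (hΨ : ∀ n : ℕ, 1 ≤ n → (n : ℚ) • S n = ∑ k ∈ Finset.range n, S k * Ψ (n - k))
    (I : List ℕ) (i : ℕ) (hi : 0 < i)
    (ih : ∀ k < i, SProd I * S k = ∑ J ∈ C (I.sum + k), H Ψ J I) :
    SProd I * S i = ∑ J ∈ C (I.sum + i), H Ψ J I := by
  rw [sum_C_snoc _ (by omega), Finset.sum_range_add]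
  rw [Finset.sum_eq_zero, zero_add]
  · have hi' : (i : ℚ) ≠ 0 := by exact_mod_cast hi.ne'
    have : SProd I * S i = (i : ℚ)⁻¹ • (SProd I * ((i : ℚ) • S i)) := by
      rw [mul_smul_comm, smul_smul, inv_mul_cancel₀ hi', one_smul]
    rw [this, hΨ i hi, Finset.mul_sum, Finset.smul_sum]
    refine Finset.sum_congr rfl fun k hk => ?_
    have hk := Finset.mem_range.1 hk
    rw [← mul_assoc, ih k hk, Finset.sum_mul, Finset.smul_sum]
    refine Finset.sum_congr rfl fun J hJ => ?_
    have hJ := (mem_C.1 hJ).2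
    rw [H_snoc_left _ _ _ _ (by omega)]
    have e1 : I.sum + i - (I.sum + k) = i - k := by omega
    have e2 : J.sum + (i - k) - I.sum = i := by omega
    rw [e1, e2]
  · intro m hm
    have hm := Finset.mem_range.1 hm
    refine Finset.sum_eq_zero fun J hJ => ?_
    have hJ := (mem_C.1 hJ).2
    rw [H_snoc_left _ _ _ _ (by omega), H_eq_zero _ _ _ (by omega)]
    simp

theorem main1_zero (Ψ : ℕ → Sym)
    (hΨ : ∀ n : ℕ, 1 ≤ n → (n : ℚ) • S n = ∑ k ∈ Finset.range n, S k * Ψ (n - k))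
    (I : List ℕ) (hI : ∀ x ∈ I, 0 < x) :
    SProd I = ∑ J ∈ C I.sum, H Ψ J I := by
  induction I using List.reverseRecOn with
  | nil => simp [C_zero, H, psums_nil, SProd, piu]
  | append_singleton I a ihI =>
    have ha := hI a (by simp)
    have ihI := ihI fun x hx => hI x (by simp [hx])
    have key : ∀ i, SProd I * S i = ∑ J ∈ C (I.sum + i), H Ψ J I := by
      intro i
      induction i using Nat.strong_induction_on with
      | _ i ih =>
        rcases Nat.eq_zero_or_pos i with rfl | hi
        · simpa [S] using ihI
        · exact main1_step Ψ hΨ I i hi ih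
    have e : SProd (I ++ [a]) = SProd I * S a := by simp [SProd]
    rw [e, key, List.sum_append, List.sum_singleton]
    refine Finset.sum_congr rfl fun J hJ => ?_
    rw [H_snoc_right _ _ _ _ ha (mem_C.1 hJ).2]

/-- Summand in the expansion of `Ψ^I`. -/
def T (J I : List ℕ) : Sym :=
  if psums I ⊆ psums J then
    ((-1 : ℚ) ^ (J.length - I.length) * (lpP J I : ℚ)) • SProd J else 0

theorem SProd_cons (a : ℕ) (L : List ℕ) : SProd (a :: L) = S a * SProd L := by
  simp [SProd]

theorem lpP_cons (j : ℕ) (J I : List ℕ) :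
    lpP (j :: J) I = (∏ k ∈ (Finset.range J.length).filter
        (fun k => j + (J.take (k + 1)).sum ∈ psums I), J.getD k 0) *
      (if j ∈ psums I then j else 1) := by
  unfold lpP
  rw [Finset.prod_filter, List.length_cons, Finset.prod_range_succ', Finset.prod_filter]
  simp

theorem T_gt (J I : List ℕ) (i j : ℕ) (h : i < j) : T (j :: J) (i :: I) = 0 := by
  unfold T
  rw [if_neg]
  intro hs
  have := hs (mem_psums_cons.2 (Or.inl rfl))
  rcases mem_psums_cons.1 this with h | ⟨y, _, h⟩ <;> omega

theorem T_eq (J I : List ℕ) (hJ : ∀ x ∈ J, 0 < x) (hI : ∀ x ∈ I, 0 < x) (i : ℕ) :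
    T (i :: J) (i :: I) = (i : ℚ) • (S i * T J I) := by
  have hs : psums (i :: I) ⊆ psums (i :: J) ↔ psums I ⊆ psums J := by
    constructor
    · intro hs x hx
      have hp := psums_pos hI hx
      rcases mem_psums_cons.1 (hs (mem_psums_cons.2 (Or.inr ⟨x, hx, rfl⟩))) with h | ⟨y, hy, h⟩
      · omega
      · have : x = y := by omega
        exact this ▸ hy
    · intro hs x hx
      rcases mem_psums_cons.1 hx with h | ⟨y, hy, h⟩
      · exact mem_psums_cons.2 (Or.inl h)
      · exact mem_psums_cons.2 (Or.inr ⟨y, hs hy, h⟩)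
  have hl : lpP (i :: J) (i :: I) = lpP J I * i := by
    rw [lpP_cons, if_pos (mem_psums_cons.2 (Or.inl rfl))]
    unfold lpP
    congr 2
    apply Finset.filter_congr
    intro k hk
    have hp := psums_pos hJ (mem_psums.2 ⟨k, Finset.mem_range.1 hk, rfl⟩)
    rw [mem_psums_cons]
    constructor
    · rintro (h | ⟨y, hy, h⟩)
      · omega
      · have : (J.take (k + 1)).sum = y := by omega
        exact this ▸ hy
    · intro h
      exact Or.inr ⟨_, h, rfl⟩
  unfold T
  simp only [hs, hl]
  split_ifs
  · rw [SProd_cons, mul_smul_comm, smul_smul]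
    congr 1
    simp
    ring
  · simp

theorem T_lt (J I : List ℕ) (hJ : ∀ x ∈ J, 0 < x) (hI : ∀ x ∈ I, 0 < x) (j d : ℕ)
    (hd : 0 < d) :
    T (j :: J) ((j + d) :: I) = - (S j * T J (d :: I)) := by
  have hm : ∀ s, j + s ∈ psums ((j + d) :: I) ↔ s ∈ psums (d :: I) := by
    intro s
    simp only [mem_psums_cons]
    constructor
    · rintro (h | ⟨y, hy, h⟩)
      · left; omega
      · right; exact ⟨y, hy, by omega⟩
    · rintro (h | ⟨y, hy, h⟩)
      · left; omega
      · right; exact ⟨y, hy, by omega⟩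
  have hs : psums ((j + d) :: I) ⊆ psums (j :: J) ↔ psums (d :: I) ⊆ psums J := by
    constructor
    · intro hs x hx
      have hp : 0 < x := psums_pos (L := d :: I) (by simpa [hd] using hI) hx
      rcases mem_psums_cons.1 (hs ((hm x).2 hx)) with h | ⟨y, hy, h⟩
      · omega
      · have : x = y := by omega
        exact this ▸ hy
    · intro hs x hx
      have : ∃ s, x = j + s := by
        rcases mem_psums_cons.1 hx with h | ⟨y, hy, h⟩
        · exact ⟨d, h⟩
        · exact ⟨d + y, by omega⟩
      obtain ⟨s, rfl⟩ := this
      exact mem_psums_cons.2 (Or.inr ⟨s, hs ((hm s).1 hx), rfl⟩)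
  have hl : lpP (j :: J) ((j + d) :: I) = lpP J (d :: I) := by
    rw [lpP_cons, if_neg, mul_one]
    · unfold lpP
      simp only [hm]
    · intro h
      rcases mem_psums_cons.1 h with h | ⟨y, hy, h⟩ <;> omega
  unfold T
  simp only [hs, hl]
  split_ifs with h
  · have hc := Finset.card_le_card h
    rw [card_psums hJ, card_psums (L := d :: I) (by simpa [hd] using hI)] at hc
    simp only [List.length_cons] at hc ⊢
    have e : J.length + 1 - (I.length + 1) = (J.length - (I.length + 1)) + 1 := by omega
    rw [SProd_cons, mul_smul_comm, ← neg_smul, e, pow_succ]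
    congr 1
    ring
  · simp

theorem main2 (Ψ : ℕ → Sym)
    (hΨ : ∀ n : ℕ, 1 ≤ n → (n : ℚ) • S n = ∑ k ∈ Finset.range n, S k * Ψ (n - k))
    (I : List ℕ) (hI : ∀ x ∈ I, 0 < x) :
    (I.map Ψ).prod = ∑ J ∈ C I.sum, T J I := by
  induction I with
  | nil => simp [C_zero, T, psums_nil, SProd, lpP]
  | cons i I ihI =>
    have hi := hI i (by simp)
    have hI' : ∀ x ∈ I, 0 < x := fun x hx => hI x (by simp [hx])
    have ihI := ihI hI'
    clear hI
    induction i using Nat.strong_induction_on with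
    | _ i ih =>
      obtain ⟨d, rfl⟩ : ∃ d, i = d + 1 := ⟨i - 1, by omega⟩
      have h := hΨ (d + 1) hi
      rw [Finset.sum_range_succ'] at h
      simp only [S, one_mul, Nat.sub_zero] at h
      rw [List.sum_cons, sum_C_cons _ (by omega), Finset.sum_range_add,
        Finset.sum_range_succ]
      have z : ∑ x ∈ Finset.range I.sum, ∑ J ∈ C (d + 1 + I.sum - (d + 1 + x + 1)),
          T ((d + 1 + x + 1) :: J) ((d + 1) :: I) = 0 :=
        Finset.sum_eq_zero fun x _ => Finset.sum_eq_zero fun J _ => T_gt _ _ _ _ (by omega)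
      have m : ∑ J ∈ C (d + 1 + I.sum - (d + 1)), T ((d + 1) :: J) ((d + 1) :: I) =
          ((d + 1 : ℕ) : ℚ) • S (d + 1) * (I.map Ψ).prod := by
        rw [ihI, Finset.mul_sum]
        have e : d + 1 + I.sum - (d + 1) = I.sum := by omega
        rw [e]
        refine Finset.sum_congr rfl fun J hJ => ?_
        rw [T_eq _ _ (mem_C.1 hJ).1 hI', smul_mul_assoc]
      have l : ∀ x ∈ Finset.range d, ∑ J ∈ C (d + 1 + I.sum - (x + 1)),
          T ((x + 1) :: J) ((d + 1) :: I) =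
          - (S (x + 1) * Ψ (d + 1 - (x + 1)) * (I.map Ψ).prod) := by
        intro x hx
        have hx := Finset.mem_range.1 hx
        have q := ih (d - x) (by omega) (by omega)
        rw [List.map_cons, List.prod_cons, List.sum_cons] at q
        have e1 : d + 1 - (x + 1) = d - x := by omega
        have e2 : d + 1 + I.sum - (x + 1) = d - x + I.sum := by omega
        rw [e1, e2, mul_assoc, q, Finset.mul_sum, ← Finset.sum_neg_distrib]
        refine Finset.sum_congr rfl fun J hJ => ?_
        rw [← T_lt _ _ (mem_C.1 hJ).1 hI' _ _ (by omega)]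
        have e3 : x + 1 + (d - x) = d + 1 := by omega
        rw [e3]
      rw [z, m, Finset.sum_congr rfl l, List.map_cons, List.prod_cons]
      simp only [S]
      rw [h, add_mul, Finset.sum_neg_distrib, Finset.sum_mul]
      simp

/-- **Transition between the bases `S^I` and `Ψ^J`**: if `Ψ` satisfies the defining
recursion `n·S_n = ∑_{k=0}^{n−1} S_k Ψ_{n−k}` of the noncommutative power sums of the
first kind, then for every composition `I` of `n`,
`S^I = ∑_{J ⪰ I} (1/π_u(J,I)) Ψ^J` and
`Ψ^I = ∑_{J ⪰ I} (−1)^{ℓ(J)−ℓ(I)} lp(J,I) S^J`. -/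
theorem S_psi_transition
    (Ψ : ℕ → Sym)
    (hΨ : ∀ n : ℕ, 1 ≤ n → (n : ℚ) • S n = ∑ k ∈ Finset.range n, S k * Ψ (n - k))
    (n : ℕ) (I : Composition n) :
    (SProd I.blocks =
      ∑ J : Composition n,
        if psums I.blocks ⊆ psums J.blocks then
          ((piu J.blocks I.blocks : ℚ))⁻¹ • (J.blocks.map Ψ).prod
        else 0) ∧
    ((I.blocks.map Ψ).prod =
      ∑ J : Composition n,
        if psums I.blocks ⊆ psums J.blocks then
          ((-1 : ℚ) ^ (J.length - I.length) * (lpP J.blocks I.blocks : ℚ)) • SProd J.blocks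
        else 0) := by
  have hp : ∀ x ∈ I.blocks, 0 < x := fun x hx => I.blocks_pos hx
  constructor
  · have h := main1_zero Ψ hΨ I.blocks hp
    rw [I.blocks_sum, ← sum_C] at h
    exact h
  · have h := main2 Ψ hΨ I.blocks hp
    rw [I.blocks_sum, ← sum_C] at h
    exact h
end

end NCSF
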